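/- Let q be a real stable polynomial in the variables z₁,…,z_n whose degree in the variable z_i is at most 4, let z ∈ ℝ^n be above the roots of q, and suppose Φ_q^i(z) > 0. Set δ := 9/(4Φ_q^i(z)). Then for every j ∈ {1,…,n}: (q·∂_j∂_i³q − (∂_j q)·(∂_i³q))(z) ≤ δ·(q·∂_j∂_i⁴q − (∂_j q)·(∂_i⁴q))(z); equivalently, ∂_j(∂_i³q/q)(z) ≤ δ·∂_j(∂_i⁴q/q)(z) as derivatives of rational functions evaluated at z. -/

import Mathlib

open Polynomial

/-- A polynomial with real coefficients is real stable if it has no zero all of whose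
coordinates have strictly positive imaginary part. -/
def RealStable {n : ℕ} (p : MvPolynomial (Fin n) ℝ) : Prop :=
  ∀ z : Fin n → ℂ, (∀ k, 0 < (z k).im) → MvPolynomial.aeval z p ≠ 0

/-- `z ∈ ℝ^n` is above the roots of `p` if `p` does not vanish on the nonnegative orthant
based at `z`. -/
def AboveRoots {n : ℕ} (p : MvPolynomial (Fin n) ℝ) (z : Fin n → ℝ) : Prop :=
  ∀ t : Fin n → ℝ, (∀ k, 0 ≤ t k) → MvPolynomial.eval (z + t) p ≠ 0

/-- The barrier function `Φ_p^i(z) = (∂ᵢp)(z)/p(z)`. -/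
noncomputable def Phi {n : ℕ} (p : MvPolynomial (Fin n) ℝ) (i : Fin n) (z : Fin n → ℝ) : ℝ :=
  MvPolynomial.eval z (MvPolynomial.pderiv i p) / MvPolynomial.eval z p

/-!
Restrict `q` and `∂_j q` to the line through `z` in the direction `e_i`, obtaining univariate
polynomials `f` and `g` of degree at most `m + 1`; their coefficients are, up to factorials, the
derivatives in the claim. Real stability, pushed to the boundary, says that `g / f` maps the upper
half-plane to the closed lower one. After the substitution `x ↦ 1 / x` the leading coefficient of
the denominator is `f 0 ≠ 0`, its roots are nonpositive because `f` has no zero on `[0, ∞)`, and the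
partial fractions of the transformed quotient have nonnegative residues. The inequality is linear in
these residues, so it may be checked on one simple fraction at a time, where it is the
Cauchy–Schwarz bound `m² ∏ x ≤ (∑ x) ∑ᵢ ∏_{j ≠ i} xⱼ` for `m` nonnegative numbers. For degree four,
`m = 3` gives the constant `m² / (m + 1) = 9 / 4`.
-/

open Filter Topology ComplexConjugate Finset

lemma card_sq_mul_prod_le {ι : Type*} [DecidableEq ι] {s : Finset ι} {x : ι → ℝ}
    (hx : ∀ i ∈ s, 0 ≤ x i) :
    (#s : ℝ) ^ 2 * ∏ i ∈ s, x i ≤ (∑ i ∈ s, x i) * ∑ i ∈ s, ∏ j ∈ s.erase i, x j := by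
  have hprod : 0 ≤ ∏ i ∈ s, x i := prod_nonneg hx
  calc (#s : ℝ) ^ 2 * ∏ i ∈ s, x i = (∑ _i ∈ s, √(∏ j ∈ s, x j)) ^ 2 := by
        rw [sum_const, nsmul_eq_mul, mul_pow, Real.sq_sqrt hprod]
    _ ≤ (∑ i ∈ s, x i) * ∑ i ∈ s, ∏ j ∈ s.erase i, x j :=
        sum_sq_le_sum_mul_sum_of_sq_le_mul s hx
          (fun i _ ↦ prod_nonneg fun j hj ↦ hx j (mem_of_mem_erase hj))
          fun i hi ↦ by rw [Real.sq_sqrt hprod, mul_prod_erase s x hi]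

section ComplexRoots

variable {g : ℂ[X]} {x y : ℂ}

lemma im_eval_derivative_mul_conj_eval_nonpos (hg : ∀ a ∈ g.roots, a.im ≤ 0) (hx : 0 ≤ x.im) :
    (g.derivative.eval x * conj (g.eval x)).im ≤ 0 := by
  obtain hgx | hgx := eq_or_ne (g.eval x) 0
  · simp [hgx]
  have hlog : (g.derivative.eval x / g.eval x).im ≤ 0 := by
    rw [(IsAlgClosed.splits g).eval_derivative_div_eval_of_ne_zero hgx,
      ← Complex.coe_imAddGroupHom, map_multiset_sum, Multiset.map_map]
    refine (Multiset.sum_map_le_sum_map _ (fun _ ↦ 0) fun a ha ↦ ?_).trans_eq Multiset.sum_map_zero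
    have hdiff : 0 ≤ (x - a).im := by
      rw [Complex.sub_im]
      linarith [hg a ha]
    calc (1 / (x - a)).im = -(x - a).im / Complex.normSq (x - a) := by rw [one_div, Complex.inv_im]
      _ ≤ 0 := div_nonpos_of_nonpos_of_nonneg (neg_nonpos.2 hdiff) (Complex.normSq_nonneg _)
  have hfac : g.derivative.eval x * conj (g.eval x) =
      Complex.normSq (g.eval x) * (g.derivative.eval x / g.eval x) := by
    rw [← Complex.mul_conj]
    field_simp
  rw [hfac, Complex.im_ofReal_mul]
  exact mul_nonpos_of_nonneg_of_nonpos (Complex.normSq_nonneg _) hlog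

lemma norm_sub_le_of_im_nonpos {a : ℂ} (ha : a.im ≤ 0) (hx : 0 < x.im) :
    ‖y - a‖ ≤ (1 + ‖y - x‖ / x.im) * ‖x - a‖ := by
  have him : x.im ≤ ‖x - a‖ := calc
    x.im ≤ (x - a).im := by rw [Complex.sub_im]; linarith
    _ ≤ ‖x - a‖ := Complex.im_le_norm _
  calc ‖y - a‖ ≤ ‖x - a‖ + ‖y - x‖ := by rw [add_comm]; exact norm_sub_le_norm_sub_add_norm_sub ..
    _ = ‖x - a‖ + ‖y - x‖ / x.im * x.im := by rw [div_mul_cancel₀ _ hx.ne']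
    _ ≤ ‖x - a‖ + ‖y - x‖ / x.im * ‖x - a‖ := by gcongr
    _ = (1 + ‖y - x‖ / x.im) * ‖x - a‖ := by ring

lemma norm_eval_eq_prod_roots (g : ℂ[X]) (x : ℂ) :
    ‖g.eval x‖ = ‖g.leadingCoeff‖ * (g.roots.map fun a ↦ ‖x - a‖).prod := by
  rw [(IsAlgClosed.splits g).eval_eq_prod_roots, norm_mul]
  congr 1
  exact (map_multiset_prod (normHom : ℂ →*₀ ℝ) _).trans (by rw [Multiset.map_map]; rfl)

lemma norm_eval_le_pow_mul_norm_eval (hg : ∀ a ∈ g.roots, a.im ≤ 0) (hx : 0 < x.im) :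
    ‖g.eval y‖ ≤ (1 + ‖y - x‖ / x.im) ^ g.natDegree * ‖g.eval x‖ := by
  have hprod : (g.roots.map fun a ↦ ‖y - a‖).prod ≤
      (1 + ‖y - x‖ / x.im) ^ g.natDegree * (g.roots.map fun a ↦ ‖x - a‖).prod := calc
    _ ≤ (g.roots.map fun a ↦ (1 + ‖y - x‖ / x.im) * ‖x - a‖).prod :=
      Multiset.prod_map_le_prod_map₀ _ _ (fun _ _ ↦ norm_nonneg _)
        fun a ha ↦ norm_sub_le_of_im_nonpos (hg a ha) hx
    _ = _ := by
      rw [Multiset.prod_map_mul, Multiset.map_const', Multiset.prod_replicate,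
        (IsAlgClosed.splits g).natDegree_eq_card_roots]
  rw [norm_eval_eq_prod_roots, norm_eval_eq_prod_roots, mul_left_comm]
  gcongr

end ComplexRoots

lemma mul_conj_im_symm (z w : ℂ) : (z * conj w).im = -(w * conj z).im := by
  simp only [Complex.mul_im, Complex.conj_re, Complex.conj_im]
  ring

lemma mul_mul_conj_im (c z w : ℂ) :
    (c * z * conj (c * w)).im = Complex.normSq c * (z * conj w).im := by
  rw [map_mul, mul_mul_mul_comm, Complex.mul_conj, Complex.im_ofReal_mul]

lemma ne_zero_of_im_pos {z : ℂ} (hz : 0 < z.im) : z ≠ 0 := by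
  rintro rfl
  exact lt_irrefl _ hz

lemma im_conj_inv_pos {z : ℂ} (hz : 0 < z.im) : 0 < (conj z⁻¹).im := by
  rw [Complex.conj_im, Complex.inv_im, neg_div, neg_neg]
  exact div_pos hz (Complex.normSq_pos.2 (ne_zero_of_im_pos hz))

lemma exists_im_pos_im_pow_eq_sin {m : ℕ} {θ : ℝ} (hθ : 0 < θ) (hθm : θ < m * Real.pi) :
    ∃ ω : ℂ, 0 < ω.im ∧ (ω ^ m).im = Real.sin θ := by
  have hm : (0 : ℝ) < m := pos_of_mul_pos_left (hθ.trans hθm) Real.pi_pos.le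
  refine ⟨Complex.exp ((θ / m : ℝ) * Complex.I), ?_, ?_⟩
  · rw [Complex.exp_ofReal_mul_I_im]
    exact Real.sin_pos_of_pos_of_lt_pi (div_pos hθ hm) ((div_lt_iff₀' hm).2 hθm)
  · rw [← Complex.exp_nat_mul, ← mul_assoc, ← Complex.ofReal_natCast, ← Complex.ofReal_mul,
      mul_div_cancel₀ _ hm.ne', Complex.exp_ofReal_mul_I_im]

lemma aeval_reflect {R K : Type*} [CommSemiring R] [Field K] [Algebra R K] {f : R[X]} {N : ℕ}
    (hf : f.natDegree ≤ N) {u : K} (hu : u ≠ 0) :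
    aeval u (reflect N f) = u ^ N * aeval u⁻¹ f := by
  let := invertibleOfNonzero (inv_ne_zero hu)
  have hrefl := eval₂_reflect_mul_pow (algebraMap R K) u⁻¹ N f hf
  rw [invOf_eq_inv, inv_inv] at hrefl
  rw [aeval_def, aeval_def, ← hrefl, mul_left_comm, ← mul_pow, mul_inv_cancel₀ hu, one_pow, mul_one]

lemma tendsto_aeval_add_mul (p : ℝ[X]) (a : ℝ) (ω : ℂ) :
    Tendsto (fun ε : ℝ ↦ aeval (a + ε * ω : ℂ) p) (𝓝[>] 0) (𝓝 ((p.eval a : ℝ) : ℂ)) := by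
  have hcont : Continuous fun ε : ℝ ↦ aeval (a + ε * ω : ℂ) p :=
    p.continuous_aeval.comp (by fun_prop)
  have hzero : aeval (a + (0 : ℝ) * ω : ℂ) p = ((p.eval a : ℝ) : ℂ) := by
    rw [Complex.ofReal_zero, zero_mul, add_zero]
    exact aeval_algebraMap_apply_eq_algebraMap_eval a p
  exact hzero ▸ hcont.continuousWithinAt

lemma im_add_mul_I_pos {σ : Type*} {w : σ → ℂ} (hw : ∀ k, 0 ≤ (w k).im) {ε : ℝ} (hε : 0 < ε)
    (k : σ) : 0 < ((w + fun _ ↦ ε * Complex.I : σ → ℂ) k).im := by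
  simpa using add_pos_of_nonneg_of_pos (hw k) hε

lemma tendsto_aeval_add_mul_I {σ : Type*} (p : MvPolynomial σ ℝ) (w : σ → ℂ) :
    Tendsto (fun ε : ℝ ↦ MvPolynomial.aeval (w + fun _ ↦ ε * Complex.I : σ → ℂ) p) (𝓝[>] 0)
      (𝓝 (MvPolynomial.aeval w p)) := by
  have hcont : Continuous fun v : σ → ℂ ↦ MvPolynomial.aeval v p := by
    simpa only [MvPolynomial.aeval_def, ← MvPolynomial.eval_map] using
      MvPolynomial.continuous_eval (MvPolynomial.map (algebraMap ℝ ℂ) p)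
  have hpath : Continuous fun ε : ℝ ↦ (w + fun _ ↦ ε * Complex.I : σ → ℂ) := by fun_prop
  have hzero : (w + fun _ ↦ ((0 : ℝ) : ℂ) * Complex.I : σ → ℂ) = w := by
    funext k
    simp
  have hlim := (hcont.comp hpath).continuousWithinAt (s := Set.Ioi 0) (x := 0)
  simpa only [ContinuousWithinAt, Function.comp_def, hzero] using hlim

/-- `ProperPosition g f`: the rational function `g / f` maps the open upper half-plane into the
closed lower one. In the language of stable polynomials, `g` and `f` are in proper position, which
for real-rooted polynomials means that their roots interlace. Multiplying by the conjugate of `f`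
instead of dividing makes the notion meaningful at common roots. -/
def ProperPosition (g f : ℝ[X]) : Prop :=
  ∀ u : ℂ, 0 < u.im → (aeval u g * conj (aeval u f)).im ≤ 0

namespace ProperPosition

variable {f g h : ℝ[X]} {a : ℝ}

lemma C_mul_sub (c : ℝ) (hfg : ProperPosition f g) : ProperPosition (C c * f - g) f := by
  intro u hu
  have him : (aeval u (C c * f - g) * conj (aeval u f)).im = (aeval u f * conj (aeval u g)).im := by
    rw [map_sub, map_mul, aeval_C, Complex.coe_algebraMap, sub_mul, mul_assoc, Complex.mul_conj,
      Complex.sub_im, ← Complex.ofReal_mul, Complex.ofReal_im, mul_conj_im_symm (aeval u g)]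
    ring
  exact him.trans_le (hfg u hu)

lemma mul_left (k : ℝ[X]) (hgf : ProperPosition g f) : ProperPosition (k * g) (k * f) := by
  intro u hu
  rw [map_mul, map_mul, mul_mul_conj_im]
  exact mul_nonpos_of_nonneg_of_nonpos (Complex.normSq_nonneg _) (hgf u hu)

lemma of_mul_left {k : ℝ[X]} (hk : ∀ u : ℂ, 0 < u.im → aeval u k ≠ 0)
    (hgf : ProperPosition (k * g) (k * f)) : ProperPosition g f := by
  intro u hu
  have hu' := hgf u hu
  rw [map_mul, map_mul, mul_mul_conj_im] at hu'
  exact nonpos_of_mul_nonpos_right hu' (Complex.normSq_pos.2 (hk u hu))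

-- Inversion swaps the two half-planes, hence the exchange of `f` and `g`.
lemma reflect {N : ℕ} (hf : f.natDegree ≤ N) (hg : g.natDegree ≤ N) (hgf : ProperPosition g f) :
    ProperPosition (reflect N f) (reflect N g) := by
  intro u hu
  have hu0 : u ≠ 0 := ne_zero_of_im_pos hu
  have hconj := hgf _ (im_conj_inv_pos hu)
  rw [aeval_conj, aeval_conj, ← map_mul, Complex.conj_im, ← mul_conj_im_symm] at hconj
  rw [aeval_reflect hf hu0, aeval_reflect hg hu0, mul_mul_conj_im]
  exact mul_nonpos_of_nonneg_of_nonpos (Complex.normSq_nonneg _) hconj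

-- Approach `a` along `a + ε ω` and compare the leading terms as `ε → 0`.
lemma eval_mul_eval_mul_im_pow_nonneg {m : ℕ} (hgh : ProperPosition g ((X - C a) ^ m * h)) {ω : ℂ}
    (hω : 0 < ω.im) : 0 ≤ g.eval a * h.eval a * (ω ^ m).im := by
  have hε : ∀ ε : ℝ, 0 < ε →
      (aeval (a + ε * ω : ℂ) g * conj (ω ^ m * aeval (a + ε * ω : ℂ) h)).im ≤ 0 := by
    intro ε hε
    have him := hgh (a + ε * ω) (by simpa using mul_pos hε hω)
    have hfac : aeval (a + ε * ω : ℂ) ((X - C a) ^ m * h) =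
        ((ε ^ m : ℝ) : ℂ) * (ω ^ m * aeval (a + ε * ω : ℂ) h) := by
      simp [mul_pow, mul_assoc]
    rw [hfac, map_mul, Complex.conj_ofReal, mul_left_comm, Complex.im_ofReal_mul] at him
    exact nonpos_of_mul_nonpos_right him (pow_pos hε m)
  have hlim : Tendsto (fun ε : ℝ ↦
      (aeval (a + ε * ω : ℂ) g * conj (ω ^ m * aeval (a + ε * ω : ℂ) h)).im) (𝓝[>] 0)
      (𝓝 (((g.eval a : ℝ) : ℂ) * conj (ω ^ m * ((h.eval a : ℝ) : ℂ))).im) :=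
    (Complex.continuous_im.tendsto _).comp ((tendsto_aeval_add_mul g a ω).mul
      ((Complex.continuous_conj.tendsto _).comp ((tendsto_aeval_add_mul h a ω).const_mul _)))
  have hnonpos := le_of_tendsto hlim (eventually_mem_nhdsWithin.mono hε)
  rw [map_mul, Complex.conj_ofReal, Complex.im_ofReal_mul, Complex.im_mul_ofReal,
    Complex.conj_im] at hnonpos
  linarith

lemma eval_mul_eval_nonneg (hgh : ProperPosition g ((X - C a) * h)) :
    0 ≤ g.eval a * h.eval a := by
  rw [← pow_one (X - C a)] at hgh
  simpa using hgh.eval_mul_eval_mul_im_pow_nonneg (ω := Complex.I) (by simp)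

-- If `a` has multiplicity `m ≥ 2`, then `Im (ω ^ m)` takes both signs on the upper half-plane.
lemma eval_eq_zero_of_sq_dvd (hgf : ProperPosition g f) (hf : f ≠ 0) (hdvd : (X - C a) ^ 2 ∣ f) :
    g.eval a = 0 := by
  obtain ⟨h, hfac, hndvd⟩ := exists_eq_pow_rootMultiplicity_mul_and_not_dvd f hf a
  have hm : (2 : ℝ) ≤ rootMultiplicity a f := by
    exact_mod_cast (le_rootMultiplicity_iff hf).2 hdvd
  have hpi := Real.pi_pos
  obtain ⟨ω₁, hω₁, him₁⟩ := exists_im_pos_im_pow_eq_sin (m := rootMultiplicity a f)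
    (θ := Real.pi / 2) (by positivity) (by nlinarith)
  obtain ⟨ω₂, hω₂, him₂⟩ := exists_im_pos_im_pow_eq_sin (m := rootMultiplicity a f)
    (θ := Real.pi / 2 + Real.pi) (by positivity) (by nlinarith)
  rw [hfac] at hgf
  have hpos := hgf.eval_mul_eval_mul_im_pow_nonneg hω₁
  have hneg := hgf.eval_mul_eval_mul_im_pow_nonneg hω₂
  rw [him₁, Real.sin_pi_div_two] at hpos
  rw [him₂, Real.sin_add_pi, Real.sin_pi_div_two] at hneg
  have hzero : g.eval a * h.eval a = 0 := by linarith
  exact (mul_eq_zero.1 hzero).resolve_right fun hh ↦ hndvd (dvd_iff_isRoot.2 hh)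

end ProperPosition

section PartialFractions

open Lagrange

lemma coeff_zero_nodal {ι : Type*} (s : Finset ι) (r : ι → ℝ) :
    (nodal s r).coeff 0 = ∏ i ∈ s, -r i := by
  simp [coeff_zero_eq_eval_zero, eval_nodal]

variable {ι : Type*} {s : Finset ι} {r : ι → ℝ} {g : ℝ[X]}

namespace ProperPosition

lemma exists_eq_sum_nodal_erase_of_injOn [DecidableEq ι] (hr : Set.InjOn r s)
    (hdeg : g.degree < #s) (hg : ProperPosition g (nodal s r)) :
    ∃ v : ι → ℝ, (∀ l ∈ s, 0 ≤ v l) ∧ g = ∑ l ∈ s, C (v l) * nodal (s.erase l) r := by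
  refine ⟨fun l ↦ g.eval (r l) / ∏ j ∈ s.erase l, (r l - r j), fun l hl ↦ ?_, ?_⟩
  · rw [nodal_eq_mul_nodal_erase hl] at hg
    dsimp only
    rw [← eval_nodal]
    exact div_nonneg_iff.2 (mul_nonneg_iff.1 hg.eval_mul_eval_nonneg)
  · conv_lhs => rw [eq_interpolate hr hdeg, interpolate_eq_sum]
    simp only [nodal]

lemma exists_eq_sum_nodal_erase [DecidableEq ι] (hdeg : g.degree < #s)
    (hg : ProperPosition g (nodal s r)) :
    ∃ v : ι → ℝ, (∀ l ∈ s, 0 ≤ v l) ∧ g = ∑ l ∈ s, C (v l) * nodal (s.erase l) r := by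
  induction s using Finset.strongInduction generalizing g with | H s ih => ?_
  by_cases hr : Set.InjOn r s
  · exact hg.exists_eq_sum_nodal_erase_of_injOn hr hdeg
  obtain ⟨a, ha, b, hb, hrab, hab⟩ : ∃ a ∈ s, ∃ b ∈ s, r a = r b ∧ a ≠ b := by
    simpa [Set.InjOn] using hr
  have hsq : (X - C (r a)) ^ 2 ∣ nodal s r := by
    rw [nodal_eq_mul_nodal_erase ha, sq]
    exact mul_dvd_mul_left _ (hrab ▸ X_sub_C_dvd_nodal r (mem_erase.2 ⟨hab.symm, hb⟩))
  obtain ⟨k, rfl⟩ := dvd_iff_isRoot.2 (hg.eval_eq_zero_of_sq_dvd nodal_ne_zero hsq)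
  have hk : ProperPosition k (nodal (s.erase a) r) := by
    rw [nodal_eq_mul_nodal_erase ha] at hg
    refine hg.of_mul_left fun u hu h0 ↦ hu.ne' ?_
    simpa using congrArg Complex.im h0
  have hkdeg : k.degree < #(s.erase a) := by
    rw [degree_mul, degree_X_sub_C, ← card_erase_add_one ha, add_comm, Nat.cast_add,
      Nat.cast_one] at hdeg
    exact lt_of_add_lt_add_right hdeg
  obtain ⟨v, hv, hkv⟩ := ih _ (erase_ssubset ha) hkdeg hk
  refine ⟨Function.update v a 0, fun l hl ↦ ?_, ?_⟩
  · obtain rfl | hla := eq_or_ne l a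
    · simp
    · simpa [hla] using hv l (mem_erase.2 ⟨hla, hl⟩)
  · rw [hkv, mul_sum, ← sum_erase s (a := a) (by simp)]
    refine sum_congr rfl fun l hl ↦ ?_
    have hla : a ∈ s.erase l := mem_erase.2 ⟨(ne_of_mem_erase hl).symm, ha⟩
    rw [Function.update_of_ne (ne_of_mem_erase hl), nodal_eq_mul_nodal_erase hla,
      erase_right_comm, mul_left_comm]

end ProperPosition

lemma coeff_one_nodal [DecidableEq ι] (s : Finset ι) (r : ι → ℝ) :
    (nodal s r).coeff 1 = ∑ i ∈ s, ∏ j ∈ s.erase i, -r j := by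
  have hcoeff := coeff_derivative (nodal s r) 0
  rw [derivative_nodal, finsetSum_coeff, Nat.cast_zero, zero_add, zero_add, mul_one] at hcoeff
  simpa only [coeff_zero_nodal] using hcoeff.symm

lemma sq_mul_coeff_zero_nodal_erase_le [DecidableEq ι] {m : ℕ} {l : ι} (hl : l ∈ s)
    (hs : #s = m + 1) (hr : ∀ i ∈ s, r i ≤ 0) :
    (m : ℝ) ^ 2 * (nodal (s.erase l) r).coeff 0 ≤
      (nodal s r).coeff m * (nodal (s.erase l) r).coeff 1 := by
  have hneg : ∀ i ∈ s, 0 ≤ -r i := fun i hi ↦ neg_nonneg.2 (hr i hi)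
  have herase : ∀ i ∈ s.erase l, 0 ≤ -r i := fun i hi ↦ hneg i (mem_of_mem_erase hi)
  have hcard : #(s.erase l) = m := by rw [card_erase_of_mem hl, hs, Nat.add_sub_cancel]
  have hcoeff : (nodal s r).coeff m = ∑ i ∈ s, -r i := by
    rw [sum_neg_distrib, ← prod_X_sub_C_coeff_card_pred s r (by lia), hs, Nat.add_sub_cancel, nodal]
  rw [coeff_zero_nodal, coeff_one_nodal, hcoeff, ← hcard]
  refine (card_sq_mul_prod_le herase).trans (mul_le_mul_of_nonneg_right ?_ ?_)
  · exact sum_le_sum_of_subset_of_nonneg (erase_subset l s) fun i hi _ ↦ hneg i hi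
  · exact sum_nonneg fun i _ ↦ prod_nonneg fun j hj ↦ herase j (mem_of_mem_erase hj)

namespace ProperPosition

lemma sq_mul_coeff_zero_le_of_nodal {m : ℕ} (hg : ProperPosition g (nodal s r)) (hs : #s = m + 1)
    (hdeg : g.degree < #s) (hr : ∀ i ∈ s, r i ≤ 0) :
    (m : ℝ) ^ 2 * g.coeff 0 ≤ (nodal s r).coeff m * g.coeff 1 := by
  classical
  obtain ⟨v, hv, hsum⟩ := hg.exists_eq_sum_nodal_erase hdeg
  simp only [hsum, finsetSum_coeff, coeff_C_mul, mul_sum]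
  refine sum_le_sum fun l hl ↦ ?_
  rw [mul_left_comm, mul_left_comm _ (v l)]
  exact mul_le_mul_of_nonneg_left (sq_mul_coeff_zero_nodal_erase_le hl hs hr) (hv l hl)

lemma sq_mul_coeff_zero_le {m : ℕ} {p : ℝ[X]} (hgp : ProperPosition g p) (hp : p.Monic)
    (hsplit : p.Splits) (hm : p.natDegree = m + 1) (hroots : ∀ a ∈ p.roots, a ≤ 0)
    (hdeg : g.degree < p.degree) : (m : ℝ) ^ 2 * g.coeff 0 ≤ p.coeff m * g.coeff 1 := by
  have hnodal : p = nodal p.roots.toEnumFinset Prod.fst := calc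
    p = (p.roots.map (X - C ·)).prod := hsplit.eq_prod_roots_of_monic hp
    _ = ((p.roots.toEnumFinset.val.map Prod.fst).map (X - C ·)).prod := by
      rw [Multiset.map_toEnumFinset_fst]
    _ = nodal p.roots.toEnumFinset Prod.fst := by rw [Multiset.map_map]; rfl
  have hcard : #p.roots.toEnumFinset = m + 1 := by
    rw [Multiset.card_toEnumFinset, ← hsplit.natDegree_eq_card_roots, hm]
  have hdeg' : g.degree < #p.roots.toEnumFinset := by
    rwa [hcard, ← hm, ← degree_eq_natDegree hp.ne_zero]
  have hle := sq_mul_coeff_zero_le_of_nodal (hnodal ▸ hgp) hcard hdeg'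
    fun a ha ↦ hroots a.1 (Multiset.mem_of_mem_toEnumFinset ha)
  rwa [← hnodal] at hle

end ProperPosition

end PartialFractions

section Reversal

variable {f g : ℝ[X]} {m : ℕ}

lemma splits_of_aeval_ne_zero (hf : ∀ u : ℂ, 0 < u.im → aeval u f ≠ 0) : f.Splits := by
  refine Splits.of_splits_map (algebraMap ℝ ℂ) (IsAlgClosed.splits _) fun a ha ↦ ?_
  have hroot : aeval a f = 0 := by
    rw [aeval_def, ← eval_map]
    exact isRoot_of_mem_roots ha
  obtain him | him | him := lt_trichotomy a.im 0
  · refine absurd ?_ (hf (conj a) (by simpa using him))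
    rw [aeval_conj, hroot, map_zero]
  · exact ⟨a.re, Complex.ext rfl him.symm⟩
  · exact absurd hroot (hf a him)

lemma nonpos_of_mem_roots_reflect {N : ℕ} (hN : f.natDegree ≤ N)
    (hf : ∀ x : ℝ, 0 ≤ x → f.eval x ≠ 0) {a : ℝ} (ha : a ∈ (reflect N f).roots) : a ≤ 0 := by
  by_contra! hpos
  have hroot : aeval a (reflect N f) = 0 := isRoot_of_mem_roots ha
  rw [aeval_reflect hN hpos.ne'] at hroot
  exact mul_ne_zero (pow_ne_zero N hpos.ne') (hf _ (inv_nonneg.2 hpos.le)) hroot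

lemma aeval_reflect_ne_zero {N : ℕ} (hN : f.natDegree ≤ N)
    (hf : ∀ u : ℂ, 0 < u.im → aeval u f ≠ 0) {u : ℂ} (hu : 0 < u.im) :
    aeval u (reflect N f) ≠ 0 := by
  have hu0 : u ≠ 0 := ne_zero_of_im_pos hu
  rw [aeval_reflect hN hu0]
  refine mul_ne_zero (pow_ne_zero N hu0) fun h0 ↦ hf _ (im_conj_inv_pos hu) ?_
  rw [aeval_conj, h0, map_zero]

namespace ProperPosition

lemma sq_mul_coeff_sub_le_of_coeff_zero_eq_one (hgf : ProperPosition g f)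
    (hf : ∀ u : ℂ, 0 < u.im → aeval u f ≠ 0) (hpos : ∀ x : ℝ, 0 ≤ x → f.eval x ≠ 0)
    (hfdeg : f.natDegree ≤ m + 1) (hgdeg : g.natDegree ≤ m + 1) (hf0 : f.coeff 0 = 1) :
    (m : ℝ) ^ 2 * (g.coeff 0 * f.coeff (m + 1) - g.coeff (m + 1)) ≤
      f.coeff 1 * (g.coeff 0 * f.coeff m - g.coeff m) := by
  set P := Polynomial.reflect (m + 1) f with hP
  set R := C (g.coeff 0) * P - Polynomial.reflect (m + 1) g with hR
  have hPcoeff : P.coeff (m + 1) = 1 := by simp [hP, coeff_reflect, hf0]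
  have hPdeg : P.natDegree ≤ m + 1 := natDegree_reflect_le.trans (max_le le_rfl hfdeg)
  have hmonic : P.Monic := monic_of_natDegree_le_of_coeff_eq_one _ hPdeg hPcoeff
  have hnatDegree : P.natDegree = m + 1 :=
    natDegree_eq_of_le_of_coeff_ne_zero hPdeg (by rw [hPcoeff]; exact one_ne_zero)
  have hRdeg : R.degree < P.degree := by
    rw [degree_eq_natDegree hmonic.ne_zero, hnatDegree, degree_lt_iff_coeff_zero]
    intro k hk
    obtain rfl | hk := hk.eq_or_lt
    · simp [hR, hPcoeff, coeff_reflect]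
    · have hgP : (Polynomial.reflect (m + 1) g).natDegree ≤ m + 1 :=
        natDegree_reflect_le.trans (max_le le_rfl hgdeg)
      rw [hR, coeff_sub, coeff_C_mul, coeff_eq_zero_of_natDegree_lt (hPdeg.trans_lt hk),
        coeff_eq_zero_of_natDegree_lt (hgP.trans_lt hk), mul_zero, sub_zero]
  have hle := ((hgf.reflect hfdeg hgdeg).C_mul_sub (g.coeff 0)).sq_mul_coeff_zero_le hmonic
    (splits_of_aeval_ne_zero fun u hu ↦ aeval_reflect_ne_zero hfdeg hf hu) hnatDegree
    (fun a ↦ nonpos_of_mem_roots_reflect hfdeg hpos) hRdeg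
  simpa [hP, coeff_reflect, revAt_le] using hle

lemma sq_mul_coeff_sub_le (hgf : ProperPosition g f)
    (hf : ∀ u : ℂ, 0 < u.im → aeval u f ≠ 0) (hpos : ∀ x : ℝ, 0 ≤ x → f.eval x ≠ 0)
    (hfdeg : f.natDegree ≤ m + 1) (hgdeg : g.natDegree ≤ m + 1) :
    (m : ℝ) ^ 2 * (g.coeff 0 * f.coeff (m + 1) - f.coeff 0 * g.coeff (m + 1)) ≤
      f.coeff 1 / f.coeff 0 * (g.coeff 0 * f.coeff m - f.coeff 0 * g.coeff m) := by
  have hf0 : f.coeff 0 ≠ 0 := coeff_zero_eq_eval_zero f ▸ hpos 0 le_rfl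
  have hle := (hgf.mul_left (C (f.coeff 0)⁻¹)).sq_mul_coeff_sub_le_of_coeff_zero_eq_one (m := m)
    (fun u hu ↦ by simpa [hf0] using hf u hu) (fun x hx ↦ by simpa [hf0] using hpos x hx)
    ((natDegree_C_mul_le _ _).trans hfdeg) ((natDegree_C_mul_le _ _).trans hgdeg) (by simp [hf0])
  simp only [coeff_C_mul] at hle
  have hscale := mul_le_mul_of_nonneg_left hle (sq_nonneg (f.coeff 0))
  refine le_of_eq_of_le ?_ (hscale.trans_eq ?_) <;> field_simp

end ProperPosition

end Reversal

section RestrictLine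

open MvPolynomial (degreeOf pderiv)

variable {σ R A B : Type*} [CommSemiring R] [CommSemiring A] [CommSemiring B]
  [Algebra R A] [Algebra A B] [Algebra R B] [IsScalarTower R A B]

lemma degreeOf_pderiv_le (i j : σ) (q : MvPolynomial σ R) :
    degreeOf i (pderiv j q) ≤ degreeOf i q := by
  classical
  refine MvPolynomial.degreeOf_le_iff.2 fun d hd ↦ ?_
  rw [MvPolynomial.mem_support_iff, MvPolynomial.coeff_pderiv] at hd
  have hmem := MvPolynomial.mem_support_iff.2 (left_ne_zero_of_mul hd)
  exact (Nat.le_add_right _ _).trans (MvPolynomial.monomial_le_degreeOf i hmem)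

lemma pderiv_comm {R : Type*} [CommRing R] (i j : σ) (q : MvPolynomial σ R) :
    pderiv i (pderiv j q) = pderiv j (pderiv i q) := by
  classical
  have hcomm : ⁅pderiv (R := R) i, pderiv (R := R) j⁆ = 0 := by
    refine MvPolynomial.derivation_ext fun k ↦ ?_
    simp [Derivation.commutator_apply, MvPolynomial.pderiv_X, Pi.single_apply, apply_ite]
  rw [← sub_eq_zero, ← Derivation.commutator_apply, hcomm, Derivation.zero_apply]

variable [DecidableEq σ]

/-- The univariate polynomial `q (w + X eᵢ)`, i.e. the restriction of `q` to the line through `w` in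
the direction of the `i`-th coordinate. The base point `w` may lie in an extension `A` of the
coefficient ring. -/
noncomputable def restrictLine (w : σ → A) (i : σ) : MvPolynomial σ R →ₐ[R] A[X] :=
  MvPolynomial.aeval (C ∘ w + Pi.single i X : σ → A[X])

variable (w : σ → A) (i : σ) (q : MvPolynomial σ R)

lemma restrictLine_X (k : σ) :
    restrictLine (R := R) w i (MvPolynomial.X k) = C (w k) + (Pi.single i X : σ → A[X]) k :=
  MvPolynomial.aeval_X _ k

lemma aeval_restrictLine (x : B) :
    aeval x (restrictLine w i q) =
      MvPolynomial.aeval (algebraMap A B ∘ w + Pi.single i x : σ → B) q := by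
  have hcomp : ((aeval x).restrictScalars R).comp (restrictLine w i) =
      MvPolynomial.aeval (algebraMap A B ∘ w + Pi.single i x : σ → B) := by
    refine MvPolynomial.algHom_ext fun k ↦ ?_
    obtain rfl | hki := eq_or_ne k i <;> simp [restrictLine_X, *]
  exact DFunLike.congr_fun hcomp q

lemma eval_restrictLine (x : A) :
    (restrictLine w i q).eval x = MvPolynomial.aeval (w + Pi.single i x) q :=
  aeval_restrictLine (B := A) w i q x

lemma coeff_zero_restrictLine : (restrictLine w i q).coeff 0 = MvPolynomial.aeval w q := by
  rw [coeff_zero_eq_eval_zero, eval_restrictLine, Pi.single_zero, add_zero]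

lemma derivative_restrictLine :
    derivative (restrictLine w i q) = restrictLine w i (pderiv i q) := by
  induction q using MvPolynomial.induction_on with
  | C a =>
    rw [MvPolynomial.pderiv_C, map_zero, restrictLine, MvPolynomial.aeval_C]
    exact derivative_C
  | add p q hp hq => simp only [map_add, hp, hq]
  | mul_X p k hp =>
    have hX : derivative (restrictLine (R := R) w i (MvPolynomial.X k)) =
        restrictLine w i (pderiv (R := R) i (MvPolynomial.X k)) := by
      obtain rfl | hki := eq_or_ne k i
      · simp [restrictLine_X]
      · simp [restrictLine_X, hki, MvPolynomial.pderiv_X_of_ne hki]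
    rw [map_mul, derivative_mul, hp, hX, MvPolynomial.pderiv_mul, map_add, map_mul, map_mul]

lemma factorial_mul_coeff_restrictLine (k : ℕ) :
    (k.factorial : A) * (restrictLine w i q).coeff k = MvPolynomial.aeval w ((pderiv i)^[k] q) := by
  have hiter : derivative^[k] (restrictLine w i q) = restrictLine w i ((pderiv i)^[k] q) :=
    ((show Function.Semiconj (restrictLine (R := R) w i) (pderiv i) derivative from
      fun p ↦ (derivative_restrictLine w i p).symm).iterate_right k q).symm
  rw [← coeff_zero_restrictLine w i, ← hiter, coeff_iterate_derivative, zero_add,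
    Nat.descFactorial_self, nsmul_eq_mul]

lemma natDegree_restrictLine_le : (restrictLine w i q).natDegree ≤ degreeOf i q := by
  rw [restrictLine, MvPolynomial.aeval_def, MvPolynomial.eval₂_eq]
  refine natDegree_sum_le_of_forall_le _ _ fun d hd ↦ ?_
  refine le_trans ?_ (MvPolynomial.monomial_le_degreeOf i hd)
  rw [IsScalarTower.algebraMap_apply R A A[X]]
  calc _ ≤ ∑ k ∈ d.support, ((C ∘ w + Pi.single i X : σ → A[X]) k ^ d k).natDegree :=
        (natDegree_C_mul_le _ _).trans (natDegree_prod_le _ _)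
    _ ≤ ∑ k ∈ d.support, if k = i then d k else 0 := by
        refine sum_le_sum fun k _ ↦ natDegree_pow_le.trans ?_
        obtain rfl | hki := eq_or_ne k i
        · simpa using Nat.mul_le_mul_left (d k) (natDegree_X_le (R := A))
        · simp [hki]
    _ ≤ d i := by
        rw [sum_ite_eq']
        split_ifs <;> simp

end RestrictLine

namespace RealStable

open MvPolynomial (degreeOf pderiv)

variable {n : ℕ} {q : MvPolynomial (Fin n) ℝ} {w : Fin n → ℂ} {z : Fin n → ℝ}

lemma im_nonpos_of_mem_roots_restrictLine (hq : RealStable q) (hw : ∀ k, 0 < (w k).im) (i : Fin n)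
    {a : ℂ} (ha : a ∈ (restrictLine w i q).roots) : a.im ≤ 0 := by
  by_contra! him
  refine hq (w + Pi.single i a) (fun k ↦ ?_) ?_
  · obtain rfl | hki := eq_or_ne k i
    · simpa using add_pos (hw k) him
    · simpa [hki] using hw k
  · rw [← eval_restrictLine]
    exact isRoot_of_mem_roots ha

lemma norm_aeval_le (hq : RealStable q) (hw : ∀ k, 0 ≤ (w k).im) (i : Fin n) {x : ℂ}
    (hx : 0 < x.im) :
    ‖MvPolynomial.aeval w q‖ ≤
      (1 + ‖x‖ / x.im) ^ degreeOf i q * ‖MvPolynomial.aeval (w + Pi.single i x) q‖ := by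
  have hratio : 1 ≤ 1 + ‖x‖ / x.im := le_add_of_nonneg_right (div_nonneg (norm_nonneg x) hx.le)
  have hε : ∀ ε : ℝ, 0 < ε → ‖MvPolynomial.aeval (w + fun _ ↦ ε * Complex.I : Fin n → ℂ) q‖ ≤
      (1 + ‖x‖ / x.im) ^ degreeOf i q *
        ‖MvPolynomial.aeval (w + Pi.single i x + fun _ ↦ ε * Complex.I : Fin n → ℂ) q‖ := by
    intro ε hε
    have hbound := norm_eval_le_pow_mul_norm_eval (y := 0)
      (fun a ↦ hq.im_nonpos_of_mem_roots_restrictLine (im_add_mul_I_pos hw hε) i) hx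
    rw [eval_restrictLine, eval_restrictLine, Pi.single_zero, add_zero, zero_sub, norm_neg,
      add_right_comm] at hbound
    refine hbound.trans (mul_le_mul_of_nonneg_right ?_ (norm_nonneg _))
    exact pow_le_pow_right₀ hratio (natDegree_restrictLine_le _ i q)
  have hlim := (tendsto_aeval_add_mul_I q (w + Pi.single i x)).norm.const_mul
    ((1 + ‖x‖ / x.im) ^ degreeOf i q)
  exact le_of_tendsto_of_tendsto (tendsto_aeval_add_mul_I q w).norm hlim
    (eventually_mem_nhdsWithin.mono hε)

lemma im_aeval_pderiv_mul_conj_nonpos (hq : RealStable q) (hw : ∀ k, 0 ≤ (w k).im) (j : Fin n) :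
    (MvPolynomial.aeval w (pderiv j q) * conj (MvPolynomial.aeval w q)).im ≤ 0 := by
  refine le_of_tendsto ((Complex.continuous_im.tendsto _).comp
    ((tendsto_aeval_add_mul_I (pderiv j q) w).mul
      ((Complex.continuous_conj.tendsto _).comp (tendsto_aeval_add_mul_I q w))))
    (eventually_mem_nhdsWithin.mono fun ε hε ↦ ?_)
  have him := im_eval_derivative_mul_conj_eval_nonpos (x := 0)
    (fun a ↦ hq.im_nonpos_of_mem_roots_restrictLine (im_add_mul_I_pos hw hε) j) le_rfl
  rwa [derivative_restrictLine, eval_restrictLine, eval_restrictLine, Pi.single_zero,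
    add_zero] at him

lemma properPosition_restrictLine (hq : RealStable q) (z : Fin n → ℝ) (i j : Fin n) :
    ProperPosition (restrictLine z i (pderiv j q)) (restrictLine z i q) := by
  intro u hu
  rw [aeval_restrictLine, aeval_restrictLine]
  refine hq.im_aeval_pderiv_mul_conj_nonpos (fun k ↦ ?_) j
  obtain rfl | hki := eq_or_ne k i
  · simpa using hu.le
  · simp [hki]

lemma aeval_restrictLine_ne_zero (hq : RealStable q) (hz : MvPolynomial.eval z q ≠ 0) (i : Fin n)
    {u : ℂ} (hu : 0 < u.im) : aeval u (restrictLine z i q) ≠ 0 := by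
  intro h0
  have hle := hq.norm_aeval_le (w := algebraMap ℝ ℂ ∘ z) (fun _ ↦ by simp) i hu
  rw [← aeval_restrictLine, h0, norm_zero, mul_zero] at hle
  have hzero : algebraMap ℝ ℂ (MvPolynomial.aeval z q) = 0 :=
    (MvPolynomial.aeval_algebraMap_apply ℂ z q).symm.trans (norm_le_zero_iff.1 hle)
  exact hz (Complex.ofReal_eq_zero.1 hzero)

lemma sq_mul_coeff_restrictLine_sub_le {m : ℕ} (hq : RealStable q) {i : Fin n}
    (hdeg : degreeOf i q ≤ m + 1)
    (hz : ∀ t : ℝ, 0 ≤ t → MvPolynomial.eval (z + Pi.single i t) q ≠ 0) (j : Fin n) :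
    let f := restrictLine z i q
    let g := restrictLine z i (pderiv j q)
    (m : ℝ) ^ 2 * (g.coeff 0 * f.coeff (m + 1) - f.coeff 0 * g.coeff (m + 1)) ≤
      f.coeff 1 / f.coeff 0 * (g.coeff 0 * f.coeff m - f.coeff 0 * g.coeff m) := by
  refine (hq.properPosition_restrictLine z i j).sq_mul_coeff_sub_le
    (fun u ↦ hq.aeval_restrictLine_ne_zero (by simpa using hz 0 le_rfl) i) (fun x hx ↦ ?_)
    ((natDegree_restrictLine_le z i q).trans hdeg)
    ((natDegree_restrictLine_le z i _).trans ((degreeOf_pderiv_le i j q).trans hdeg))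
  rw [eval_restrictLine]
  exact hz x hx

end RealStable

open MvPolynomial in
theorem barrier_estimate_deg_four_general {n m : ℕ} (q : MvPolynomial (Fin n) ℝ)
    (hq : RealStable q) (i : Fin n) (hdeg : degreeOf i q ≤ m + 1) (z : Fin n → ℝ)
    (hz : ∀ t : ℝ, 0 ≤ t → eval (z + Pi.single i t) q ≠ 0) (hΦ : 0 < Phi q i z) (j : Fin n) :
    eval z (q * pderiv j ((pderiv i)^[m] q) - pderiv j q * (pderiv i)^[m] q) ≤
      m ^ 2 / ((m + 1) * Phi q i z) *
        eval z (q * pderiv j ((pderiv i)^[m + 1] q) - pderiv j q * (pderiv i)^[m + 1] q) := by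
  set f := restrictLine z i q
  set g := restrictLine z i (pderiv j q)
  have hf (k : ℕ) : eval z ((pderiv i)^[k] q) = k.factorial * f.coeff k :=
    (factorial_mul_coeff_restrictLine z i q k).symm
  have hg (k : ℕ) : eval z (pderiv j ((pderiv i)^[k] q)) = k.factorial * g.coeff k := by
    rw [Function.Commute.iterate_right (pderiv_comm j i) k q]
    exact (factorial_mul_coeff_restrictLine z i (pderiv j q) k).symm
  have hf0 : eval z q = f.coeff 0 := by simpa using hf 0
  have hf1 : eval z (pderiv i q) = f.coeff 1 := by simpa using hf 1
  have hg0 : eval z (pderiv j q) = g.coeff 0 := by simpa using hg 0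
  have hΦf : Phi q i z = f.coeff 1 / f.coeff 0 := by rw [Phi, hf0, hf1]
  have hcoeff := hq.sq_mul_coeff_restrictLine_sub_le hdeg hz j
  dsimp only at hcoeff
  rw [← hΦf] at hcoeff
  rw [map_sub, map_sub, map_mul, map_mul, map_mul, map_mul, hf, hf, hg, hg, hf0, hg0,
    Nat.factorial_succ]
  push_cast
  field_simp
  linarith

/-- Degree-4 barrier estimate: if `q` is real stable of degree at most 4 in `zᵢ`, `z` is
above the roots of `q` and `Φ_q^i(z) > 0`, then with `δ = 9/(4Φ_q^i(z))`, for every `j`: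
`(q ∂_j∂_i³q - (∂_j q)(∂_i³q))(z) ≤ δ (q ∂_j∂_i⁴q - (∂_j q)(∂_i⁴q))(z)`. -/
theorem barrier_estimate_deg_four {n : ℕ} (q : MvPolynomial (Fin n) ℝ) (hq : RealStable q)
    (i : Fin n) (hdeg : MvPolynomial.degreeOf i q ≤ 4)
    (z : Fin n → ℝ) (hz : AboveRoots q z) (hΦ : 0 < Phi q i z) :
    ∀ j : Fin n,
      MvPolynomial.eval z
          (q * MvPolynomial.pderiv j
              (MvPolynomial.pderiv i (MvPolynomial.pderiv i (MvPolynomial.pderiv i q)))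
            - MvPolynomial.pderiv j q *
              MvPolynomial.pderiv i (MvPolynomial.pderiv i (MvPolynomial.pderiv i q)))
        ≤ (9 / (4 * Phi q i z)) *
          MvPolynomial.eval z
            (q * MvPolynomial.pderiv j
                (MvPolynomial.pderiv i (MvPolynomial.pderiv i
                  (MvPolynomial.pderiv i (MvPolynomial.pderiv i q))))
              - MvPolynomial.pderiv j q *
                MvPolynomial.pderiv i (MvPolynomial.pderiv i
                  (MvPolynomial.pderiv i (MvPolynomial.pderiv i q)))) := by
  have hδ : 9 / (4 * Phi q i z) = (3 : ℕ) ^ 2 / (((3 : ℕ) + 1) * Phi q i z) := by norm_num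
  exact hδ ▸ barrier_estimate_deg_four_general q hq i hdeg z
    (fun t ht ↦ hz _ (Pi.single_nonneg.2 ht : (0 : Fin n → ℝ) ≤ Pi.single i t)) hΦ
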